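/- Let K be an algebraically closed field and Δ a simplicial complex on X = {x_1,...,x_n} that is not a simplex. If F is a facet of Δ, I_Δ is a set-theoretic complete intersection, and Δ' = Δ ∪ co_{x_0}F, then ara I_{Δ'} = ara I_Δ + 1. -/

import Mathlib

open MvPolynomial

section Core

variable {V : Type*} [DecidableEq V]

/-- `Δ` is a simplicial complex on the vertex set `V`: every singleton is a face
and faces are closed under taking subsets. -/
def IsSimplicialComplex (Δ : Set (Finset V)) : Prop :=
  (∀ v : V, ({v} : Finset V) ∈ Δ) ∧ ∀ F ∈ Δ, ∀ G ⊆ F, G ∈ Δ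

/-- The Stanley-Reisner ideal of `Δ` over `K`: generated by the squarefree monomials
whose support is not a face of `Δ`. -/
noncomputable def srIdeal (K : Type*) [Field K] (Δ : Set (Finset V)) :
    Ideal (MvPolynomial V K) :=
  Ideal.span ((fun S : Finset V => ∏ v ∈ S, (X v : MvPolynomial V K)) '' {S | S ∉ Δ})

/-- The simplicial complex `Δ ∪ co_{x₀} F` on the vertex set `V ∪ {x₀}`,
realized as `Option V` with `none` playing the role of the new vertex `x₀`. -/
def coneUnion (Δ : Set (Finset V)) (F : Finset V) : Set (Finset (Option V)) :=
  ((fun G : Finset V => G.map Function.Embedding.some) '' Δ) ∪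
    {G : Finset (Option V) | G ⊆ insert none (F.map Function.Embedding.some)}

/-- A facet is a maximal face. -/
def IsFacet (Δ : Set (Finset V)) (F : Finset V) : Prop :=
  F ∈ Δ ∧ ∀ G ∈ Δ, F ⊆ G → F = G

/-- The prime ideal `P_F` generated by the variables not in `F`. -/
noncomputable def facePrime (K : Type*) [Field K] (F : Finset V) :
    Ideal (MvPolynomial V K) :=
  Ideal.span ((fun v : V => (X v : MvPolynomial V K)) '' {v : V | v ∉ F})

/-- The dimension of a simplicial complex. -/
noncomputable def scDim (Δ : Set (Finset V)) : ℕ := sSup (Finset.card '' Δ) - 1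

/-- A subfacet of a (pure) complex: a face whose cardinality equals the dimension. -/
noncomputable def IsSubfacet (Δ : Set (Finset V)) (F : Finset V) : Prop :=
  F ∈ Δ ∧ F.card = scDim Δ

end Core

/-- The arithmetical rank of an ideal: the least number of elements generating it
up to radical. -/
noncomputable def ara {R : Type*} [CommRing R] (I : Ideal R) : ℕ :=
  sInf {s : ℕ | ∃ a : Fin s → R, (Ideal.span (Set.range a)).radical = I.radical}

/-- The height of an ideal: the infimum of the heights of the primes containing it. -/
noncomputable def idealHeight {R : Type*} [CommRing R] (I : Ideal R) : ℕ∞ :=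
  ⨅ p : {p : PrimeSpectrum R // I ≤ p.asIdeal}, Order.height p.1

/-!
The ideal of the cone union is `I_Δ R' + x₀ P_F R'`, where `P_F ⊇ I_Δ` is the prime generated by the
variables outside `F`.

Upper bound. Let `I ⊆ L`, let `b₁, …, b_s` generate `I` up to radical, and write `b = M y` with
`y₁, …, y_s` generating `L`. The matrix `A = x + diag(b) M` satisfies `(A y)_i = b_i² + x y_i` and
`det A ≡ x ^ s` modulo `L`, so the `b_i² + x y_i` and `x (x ^ s - det A)` lie in `I + x L`.
Conversely, at a common zero of these `s + 1` elements Cramer's rule gives `det A · y = 0`; hence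
either `y = 0`, and then `b = 0`, or `det A = 0`, and then `x = 0` and `b = 0`. For a facet `F` the
prime `P_F` is minimal over `I_Δ`, so by Krull's height theorem it has at most `ara I_Δ` generators,
and `s = ara I_Δ` works.

Lower bound. As `Δ` is not a simplex, it has a facet `G ⊄ F`. It remains a facet of the cone union,
so by Krull again `ara I_Δ' ≥ |V \ G| + 1 ≥ height I_Δ + 1`.
-/

section SpanRank

variable {R M : Type*} [Semiring R] [AddCommMonoid M] [Module R M]

lemma exists_fin_span_range_eq_of_spanFinrank_le {N : Submodule R M} (hN : N.FG) {s : ℕ}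
    (hs : N.spanFinrank ≤ s) : ∃ y : Fin s → M, Submodule.span R (Set.range y) = N := by
  obtain ⟨A, hA, rfl⟩ := hN.exists_span_finset_card_eq_spanFinrank
  obtain ⟨k, rfl⟩ := Nat.exists_eq_add_of_le (hA.trans_le hs)
  refine ⟨Fin.append (fun i ↦ (A.equivFin.symm i : M)) 0, le_antisymm ?_ ?_⟩
  · rw [Submodule.span_le, Set.range_subset_iff, Fin.forall_fin_add]
    simp only [Fin.append_left, Fin.append_right]
    exact ⟨fun i ↦ Submodule.subset_span (A.equivFin.symm i).2, fun _ ↦ Submodule.zero_mem _⟩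
  · refine Submodule.span_mono fun m hm ↦ ⟨Fin.castAdd k (A.equivFin ⟨m, hm⟩), ?_⟩
    simp only [Fin.append_left, Equiv.symm_apply_apply]

lemma spanFinrank_span_range_le {ι : Type*} [Fintype ι] (y : ι → M) :
    (Submodule.span R (Set.range y)).spanFinrank ≤ Fintype.card ι := by
  refine (Submodule.spanFinrank_span_le_ncard_of_finite (Set.finite_range y)).trans ?_
  rw [← Set.image_univ, ← Nat.card_eq_fintype_card, ← Set.ncard_univ]
  exact Set.ncard_image_le

end SpanRank

section ArithmeticalRank

variable {R S : Type*} [CommRing R] [CommRing S] {I J : Ideal R}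

lemma ara_le_of_spanFinrank_le {s : ℕ} (hJ : J.FG) (hs : J.spanFinrank ≤ s)
    (h : J.radical = I.radical) : ara I ≤ s := by
  obtain ⟨a, ha⟩ := exists_fin_span_range_eq_of_spanFinrank_le hJ hs
  exact Nat.sInf_le ⟨a, (congrArg Ideal.radical ha).trans h⟩

lemma exists_fin_ara_radical_span_eq (hI : I.FG) :
    ∃ a : Fin (ara I) → R, (Ideal.span (Set.range a)).radical = I.radical := by
  obtain ⟨a, ha⟩ := exists_fin_span_range_eq_of_spanFinrank_le hI le_rfl
  exact Nat.sInf_mem (s := {s | ∃ a : Fin s → R, (Ideal.span (Set.range a)).radical = I.radical})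
    ⟨_, a, congrArg Ideal.radical ha⟩

/- Each member of a family generating `I` up to radical lies in `√I`, so some power of it lies
in `I`, and these powers still generate `I` up to radical. -/
lemma exists_le_spanFinrank_le_ara (hI : I.FG) :
    ∃ J ≤ I, J.FG ∧ J.spanFinrank ≤ ara I ∧ J.radical = I.radical := by
  obtain ⟨a, ha⟩ := exists_fin_ara_radical_span_eq hI
  have a_mem (i) : a i ∈ I.radical := ha ▸ Ideal.le_radical (Ideal.subset_span ⟨i, rfl⟩)
  choose n hn using a_mem
  have pow_span_le : Ideal.span (Set.range fun i ↦ a i ^ n i) ≤ I :=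
    Ideal.span_le.2 (Set.range_subset_iff.2 hn)
  refine ⟨_, pow_span_le, Submodule.fg_span (Set.finite_range _),
    by simpa using spanFinrank_span_range_le (R := R) fun i ↦ a i ^ n i,
    le_antisymm (Ideal.radical_mono pow_span_le) ?_⟩
  rw [← ha, Ideal.radical_le_radical_iff, Ideal.span_le, Set.range_subset_iff]
  exact fun i ↦ ⟨n i, Ideal.subset_span ⟨i, rfl⟩⟩

lemma ara_map_le (f : R →+* S) (hI : I.FG) : ara (I.map f) ≤ ara I := by
  obtain ⟨J, hJI, hJ, hs, hrad⟩ := exists_le_spanFinrank_le_ara hI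
  refine ara_le_of_spanFinrank_le (hJ.map f) ((Ideal.spanFinrank_map_le_of_fg f hJ).trans hs) ?_
  refine le_antisymm (Ideal.radical_mono (Ideal.map_mono hJI)) ?_
  rw [Ideal.radical_le_radical_iff]
  exact (Ideal.map_mono (hrad ▸ Ideal.le_radical)).trans (Ideal.map_radical_le f)

lemma height_le_ara_of_mem_minimalPrimes [IsNoetherianRing R] {P : Ideal R}
    (hP : P ∈ I.minimalPrimes) : P.height ≤ ara I := by
  obtain ⟨J, -, hJ, hs, hrad⟩ := exists_le_spanFinrank_le_ara I.fg_of_isNoetherianRing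
  rw [← Ideal.radical_minimalPrimes, ← hrad, Ideal.radical_minimalPrimes] at hP
  calc P.height ≤ Cardinal.toENat J.spanRank :=
        Ideal.height_le_spanRank_toENat_of_mem_minimalPrimes J P hP
    _ = J.spanFinrank := by rw [Submodule.FG.spanRank_eq_spanFinrank hJ, map_natCast]
    _ ≤ ara I := mod_cast hs

lemma idealHeight_le_height {P : Ideal R} [hP : P.IsPrime] (hIP : I ≤ P) :
    idealHeight I ≤ P.height :=
  (iInf_le _ ⟨⟨P, hP⟩, hIP⟩).trans_eq (PrimeSpectrum.height_eq_orderHeight ⟨P, hP⟩).symm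

end ArithmeticalRank

section Determinantal

open Matrix

variable {R n : Type*} [CommRing R] [Fintype n] [DecidableEq n]

lemma det_mul_mem_of_mulVec_mem {I : Ideal R} {A : Matrix n n R} {y : n → R}
    (h : ∀ i, (A *ᵥ y) i ∈ I) (j : n) : A.det * y j ∈ I := by
  have adjugate_mulVec : (A.adjugate *ᵥ (A *ᵥ y)) j = A.det * y j := by
    rw [mulVec_mulVec, adjugate_mul, smul_mulVec, one_mulVec, Pi.smul_apply, smul_eq_mul]
  rw [← adjugate_mulVec]
  exact I.sum_mem fun i _ ↦ I.mul_mem_left _ (h i)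

lemma pow_card_sub_det_smul_one_add_mem {I : Ideal R} (x : R) {N : Matrix n n R}
    (hN : ∀ i j, N i j ∈ I) : x ^ Fintype.card n - (x • (1 : Matrix n n R) + N).det ∈ I := by
  have map_N : (Ideal.Quotient.mk I).mapMatrix N = 0 := by
    ext i j
    exact Ideal.Quotient.eq_zero_iff_mem.2 (hN i j)
  rw [← Ideal.Quotient.eq, RingHom.map_det, map_add, map_N, add_zero, smul_one_eq_diagonal,
    RingHom.mapMatrix_apply, diagonal_map (map_zero _), det_diagonal, map_pow]
  simp only [Finset.prod_const, Finset.card_univ]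

variable (b y : n → R) (x : R) (M : Matrix n n R)

/-- The matrix `x • 1 + diag(b) M`. When `M *ᵥ y = b` it carries `y` to the vector with entries
`b i ^ 2 + x * y i`, and modulo any ideal containing the `b i` it is the scalar matrix `x`. -/
def coneMatrix : Matrix n n R := x • (1 : Matrix n n R) + diagonal b * M

/-- Generators, up to radical, of `(b) + x (y)` when `M *ᵥ y = b`: one more than the number of
entries of `b`. -/
def coneGenerators : Option n → R
  | none => x * (x ^ Fintype.card n - (coneMatrix b x M).det)
  | some i => b i ^ 2 + x * y i

variable {b y M}

lemma coneMatrix_mulVec (hM : M *ᵥ y = b) (i : n) :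
    (coneMatrix b x M *ᵥ y) i = b i ^ 2 + x * y i := by
  simp only [coneMatrix, add_mulVec, smul_mulVec, one_mulVec, ← mulVec_mulVec, hM, mulVec_diagonal,
    Pi.add_apply, Pi.smul_apply, smul_eq_mul]
  ring

lemma coneGenerators_mem (hb : ∀ i, b i ∈ Ideal.span (Set.range y)) (i : Option n) :
    coneGenerators b y x M i ∈
      Ideal.span (Set.range b) ⊔ Ideal.span {x} * Ideal.span (Set.range y) := by
  have mul_mem {z : R} (hz : z ∈ Ideal.span (Set.range y)) :
      x * z ∈ Ideal.span (Set.range b) ⊔ Ideal.span {x} * Ideal.span (Set.range y) :=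
    Ideal.mem_sup_right (Ideal.mul_mem_mul (Ideal.mem_span_singleton_self x) hz)
  cases i with
  | none =>
    refine mul_mem (pow_card_sub_det_smul_one_add_mem x fun i j ↦ ?_)
    rw [diagonal_mul]
    exact Ideal.mul_mem_right _ _ (hb i)
  | some i =>
    have sq_mem : b i ^ 2 ∈ Ideal.span (Set.range b) :=
      Ideal.pow_mem_of_mem _ (Ideal.subset_span (Set.mem_range_self i)) 2 two_pos
    exact Ideal.add_mem _ (Ideal.mem_sup_left sq_mem)
      (mul_mem (Ideal.subset_span (Set.mem_range_self i)))

lemma mem_or_forall_mem_of_coneGenerators_mem {p : Ideal R} [hp : p.IsPrime] (hM : M *ᵥ y = b)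
    (h : ∀ i, coneGenerators b y x M i ∈ p) : x ∈ p ∨ ∀ j, y j ∈ p := by
  by_contra! ⟨hx, j, hj⟩
  have mulVec_mem (i) : (coneMatrix b x M *ᵥ y) i ∈ p := by
    rw [coneMatrix_mulVec x hM]
    exact h (some i)
  have det_mem : (coneMatrix b x M).det ∈ p :=
    (hp.mem_or_mem (det_mul_mem_of_mulVec_mem mulVec_mem j)).resolve_right hj
  have sub_mem : x ^ Fintype.card n - (coneMatrix b x M).det ∈ p :=
    (hp.mem_or_mem (h none)).resolve_left hx
  exact hx (hp.mem_of_pow_mem _ ((p.sub_mem_iff_left det_mem).1 sub_mem))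

lemma radical_span_coneGenerators (hM : M *ᵥ y = b) :
    (Ideal.span (Set.range (coneGenerators b y x M))).radical =
      (Ideal.span (Set.range b) ⊔ Ideal.span {x} * Ideal.span (Set.range y)).radical := by
  have b_mem (i) : b i ∈ Ideal.span (Set.range y) :=
    Ideal.mem_span_range_iff_exists_fun.2 ⟨M i, congrFun hM i⟩
  refine le_antisymm (Ideal.radical_mono ?_) ?_
  · exact Ideal.span_le.2 (Set.range_subset_iff.2 (coneGenerators_mem x b_mem))
  rw [Ideal.radical_le_radical_iff, Ideal.radical_eq_sInf]
  refine le_sInf fun p ⟨hp, p_prime⟩ ↦ ?_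
  have gen_mem (i) : coneGenerators b y x M i ∈ p := hp (Ideal.subset_span (Set.mem_range_self i))
  rw [sup_le_iff, Ideal.span_le, Set.range_subset_iff]
  rcases mem_or_forall_mem_of_coneGenerators_mem x hM gen_mem with hx | hy
  · have sq_mem (i) : b i ^ 2 ∈ p := by
      have sq_add_mem : b i ^ 2 + x * y i ∈ p := gen_mem (some i)
      exact (p.add_mem_iff_left (p.mul_mem_right (y i) hx)).1 sq_add_mem
    exact ⟨fun i ↦ p_prime.mem_of_pow_mem 2 (sq_mem i),
      Ideal.mul_le_left.trans ((Ideal.span_singleton_le_iff_mem p).2 hx)⟩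
  · have span_y_le : Ideal.span (Set.range y) ≤ p := Ideal.span_le.2 (Set.range_subset_iff.2 hy)
    exact ⟨fun i ↦ span_y_le (b_mem i), Ideal.mul_le_right.trans span_y_le⟩

theorem ara_sup_span_singleton_mul_le {I L : Ideal R} (hI : I.FG) (hL : L.FG) (hIL : I ≤ L) :
    ara (I ⊔ Ideal.span {x} * L) ≤ max (ara I) L.spanFinrank + 1 := by
  obtain ⟨J, hJI, hJ, hs, hrad⟩ := exists_le_spanFinrank_le_ara hI
  obtain ⟨b, span_b⟩ := exists_fin_span_range_eq_of_spanFinrank_le hJ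
    (hs.trans (le_max_left _ L.spanFinrank))
  obtain ⟨y, span_y⟩ := exists_fin_span_range_eq_of_spanFinrank_le hL (le_max_right (ara I) _)
  rw [← Ideal.span] at span_b span_y
  have b_mem (i) : b i ∈ Ideal.span (Set.range y) := by
    rw [span_y]
    exact hIL (hJI (span_b ▸ Ideal.subset_span (Set.mem_range_self i)))
  choose M hM using fun i ↦ Ideal.mem_span_range_iff_exists_fun.1 (b_mem i)
  have radical_eq := radical_span_coneGenerators x (M := Matrix.of M) (funext hM)
  rw [span_b, span_y, Ideal.radical_sup, hrad, ← Ideal.radical_sup] at radical_eq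
  refine ara_le_of_spanFinrank_le (Submodule.fg_span (Set.finite_range _)) ?_ radical_eq
  simpa using spanFinrank_span_range_le (R := R) (coneGenerators b y x (Matrix.of M))

end Determinantal

section VariableIdeals

variable {σ τ R : Type*}

lemma ker_killCompl [CommRing R] {f : σ → τ} (hf : Function.Injective f) :
    RingHom.ker (killCompl hf : MvPolynomial τ R →ₐ[R] MvPolynomial σ R) =
      Ideal.span (X '' (Set.range f)ᶜ) := by
  ext p
  simp only [RingHom.mem_ker, mem_ideal_span_X_image, MvPolynomial.ext_iff, coeff_killCompl,
    coeff_zero]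
  constructor
  · intro h m hm
    by_contra! hrange
    have support_subset : (m.support : Set τ) ⊆ Set.range f := fun i hi ↦
      by_contra fun hif ↦ Finsupp.mem_support_iff.1 hi (hrange i hif)
    rw [← Finsupp.mapDomain_comapDomain f hf m support_subset] at hm
    exact mem_support_iff.1 hm (h _)
  · intro h m
    by_contra hm
    obtain ⟨i, hi, hmi⟩ := h _ (mem_support_iff.2 hm)
    exact hmi (Finsupp.mapDomain_of_notMem_range m i hi)

lemma X_mem_span_X_image [CommSemiring R] [Nontrivial R] {T : Set σ} {v : σ} :
    (X v : MvPolynomial σ R) ∈ Ideal.span (X '' T) ↔ v ∈ T := by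
  classical
  simp [mem_ideal_span_X_image, support_X, Finsupp.single_apply]

lemma rename_some_prod_X [CommSemiring R] (S : Finset σ) :
    rename some (∏ v ∈ S, X v : MvPolynomial σ R) =
      ∏ v ∈ S.map Function.Embedding.some, X v := by
  simp

variable [CommRing R] [IsDomain R]

lemma isPrime_span_X_image (T : Set σ) :
    (Ideal.span (X '' T : Set (MvPolynomial σ R))).IsPrime := by
  have ker_eq := ker_killCompl (R := R) (Subtype.val_injective (p := (· ∈ Tᶜ)))
  rw [Subtype.range_coe_subtype, Set.ofPred_mem_eq, compl_compl] at ker_eq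
  rw [← ker_eq]
  exact RingHom.ker_isPrime _

lemma card_le_height_span_X_image (T : Finset σ) :
    (T.card : ℕ∞) ≤ (Ideal.span (X '' (T : Set σ) : Set (MvPolynomial σ R))).height := by
  classical
  induction T using Finset.induction_on with
  | empty => simp
  | insert v T hv ih =>
    have := isPrime_span_X_image (R := R) (T : Set σ)
    have := isPrime_span_X_image (R := R) ((insert v T : Finset σ) : Set σ)
    have span_lt : Ideal.span (X '' (T : Set σ) : Set (MvPolynomial σ R)) <
        Ideal.span (X '' ((insert v T : Finset σ) : Set σ)) := by
      refine SetLike.lt_iff_le_and_exists.2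
        ⟨Ideal.span_mono (Set.image_mono (by simp)), X v, ?_, ?_⟩
      · simp [X_mem_span_X_image]
      · simpa [X_mem_span_X_image] using hv
    calc ((insert v T).card : ℕ∞) = T.card + 1 := by simp [hv]
      _ ≤ (Ideal.span (X '' (T : Set σ) : Set (MvPolynomial σ R))).height + 1 := by gcongr
      _ ≤ _ := Ideal.height_add_one_le_of_lt_of_isPrime span_lt

end VariableIdeals

section Faces

variable {V : Type*} {Δ : Set (Finset V)}

lemma IsSimplicialComplex.isLowerSet (hΔ : IsSimplicialComplex Δ) : IsLowerSet Δ :=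
  fun F G hGF hF ↦ hΔ.2 F hF G hGF

lemma exists_isFacet_superset [Finite V] {S : Finset V} (hS : S ∈ Δ) :
    ∃ G, S ⊆ G ∧ IsFacet Δ G := by
  obtain ⟨G, hSG, hG⟩ := (Set.toFinite Δ).exists_le_maximal hS
  exact ⟨G, hSG, hG.prop, fun H hH hGH ↦ hG.eq_of_le hH hGH⟩

lemma IsSimplicialComplex.exists_isFacet_not_subset [Finite V] (hΔ : IsSimplicialComplex Δ)
    (hsimplex : Δ ≠ Set.univ) {F : Finset V} (hF : F ∈ Δ) :
    ∃ G, IsFacet Δ G ∧ ¬ G ⊆ F := by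
  obtain ⟨S, hS⟩ := (Set.ne_univ_iff_exists_notMem Δ).1 hsimplex
  obtain ⟨v, -, hvF⟩ := Finset.not_subset.1 fun hSF ↦ hS (hΔ.isLowerSet hSF hF)
  obtain ⟨G, hvG, hG⟩ := exists_isFacet_superset (hΔ.1 v)
  exact ⟨G, hG, fun hGF ↦ hvF (hGF (Finset.singleton_subset_iff.1 hvG))⟩

variable (K : Type*) [Field K]

lemma prod_X_mem_srIdeal {S : Finset V} (hS : S ∉ Δ) :
    (∏ v ∈ S, X v : MvPolynomial V K) ∈ srIdeal K Δ :=
  Ideal.subset_span ⟨S, hS, rfl⟩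

lemma isPrime_facePrime (F : Finset V) : (facePrime K F).IsPrime :=
  isPrime_span_X_image _

variable {K}

lemma X_mem_facePrime {F : Finset V} {v : V} :
    (X v : MvPolynomial V K) ∈ facePrime K F ↔ v ∉ F :=
  X_mem_span_X_image

lemma srIdeal_le_facePrime (hΔ : IsLowerSet Δ) {F : Finset V} (hF : F ∈ Δ) :
    srIdeal K Δ ≤ facePrime K F := by
  rw [srIdeal, Ideal.span_le]
  rintro _ ⟨S, hS, rfl⟩
  obtain ⟨v, hvS, hvF⟩ := Finset.not_subset.1 fun hSF ↦ hS (hΔ hSF hF)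
  exact Ideal.mem_of_dvd _ (Finset.dvd_prod_of_mem _ hvS) (X_mem_facePrime.2 hvF)

lemma IsFacet.facePrime_mem_minimalPrimes (hΔ : IsLowerSet Δ) {F : Finset V} (hF : IsFacet Δ F) :
    facePrime K F ∈ (srIdeal K Δ).minimalPrimes := by
  classical
  refine ⟨⟨isPrime_facePrime K F, srIdeal_le_facePrime hΔ hF.1⟩, fun Q ⟨hQ, hIQ⟩ hQF ↦ ?_⟩
  rw [facePrime, Ideal.span_le]
  rintro _ ⟨v, hv, rfl⟩
  have insert_notMem : insert v F ∉ Δ := fun h ↦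
    hv (hF.2 _ h (Finset.subset_insert v F) ▸ Finset.mem_insert_self v F)
  obtain ⟨w, hw, hwQ⟩ := hQ.prod_mem_iff.1 (hIQ (prod_X_mem_srIdeal K insert_notMem))
  rcases Finset.mem_insert.1 hw with rfl | hwF
  · exact hwQ
  · exact absurd hwF (X_mem_facePrime.1 (hQF hwQ))

variable [Fintype V] [DecidableEq V]

lemma facePrime_eq_span_X_image_compl (F : Finset V) :
    facePrime K F = Ideal.span (X '' ((Fᶜ : Finset V) : Set V)) := by
  simp only [facePrime, Finset.coe_compl]
  rfl

lemma spanFinrank_facePrime_le (F : Finset V) : (facePrime K F).spanFinrank ≤ Fᶜ.card := by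
  rw [facePrime_eq_span_X_image_compl]
  refine (Submodule.spanFinrank_span_le_ncard_of_finite (Set.toFinite _)).trans ?_
  exact (Set.ncard_image_le (Finset.finite_toSet _)).trans_eq (Set.ncard_coe_finset _)

lemma height_facePrime (F : Finset V) : (facePrime K F).height = Fᶜ.card := by
  refine le_antisymm ?_ ?_
  · refine (Ideal.height_le_spanFinrank _ (isPrime_facePrime K F).ne_top).trans ?_
    exact mod_cast spanFinrank_facePrime_le F
  · rw [facePrime_eq_span_X_image_compl]
    exact card_le_height_span_X_image _

lemma IsFacet.card_compl_le_ara (hΔ : IsLowerSet Δ) {F : Finset V} (hF : IsFacet Δ F) :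
    Fᶜ.card ≤ ara (srIdeal K Δ) := by
  have height_le := height_le_ara_of_mem_minimalPrimes (hF.facePrime_mem_minimalPrimes (K := K) hΔ)
  rw [height_facePrime] at height_le
  exact mod_cast height_le

lemma idealHeight_srIdeal_le_card_compl (hΔ : IsLowerSet Δ) {F : Finset V} (hF : F ∈ Δ) :
    idealHeight (srIdeal K Δ) ≤ Fᶜ.card := by
  have := isPrime_facePrime K F
  exact (idealHeight_le_height (srIdeal_le_facePrime hΔ hF)).trans_eq (height_facePrime F)

end Faces

section ConeUnion

open Function (Embedding)

variable {V : Type*} [DecidableEq V] {Δ : Set (Finset V)} {F : Finset V}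

lemma map_some_subset_insert_none_iff {S : Finset V} :
    S.map Embedding.some ⊆ insert none (F.map Embedding.some) ↔ S ⊆ F := by
  simp [Finset.subset_iff]

lemma isLowerSet_coneUnion (hΔ : IsLowerSet Δ) (F : Finset V) : IsLowerSet (coneUnion Δ F) := by
  rintro A B hBA (⟨G, hG, rfl⟩ | hA)
  · obtain ⟨H, hHG, rfl⟩ := Finset.subset_map_iff.1 hBA
    exact Or.inl ⟨H, hΔ hHG hG, rfl⟩
  · exact Or.inr (hBA.trans hA)

lemma map_some_mem_coneUnion (hΔ : IsLowerSet Δ) (hF : F ∈ Δ) {S : Finset V} :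
    S.map Embedding.some ∈ coneUnion Δ F ↔ S ∈ Δ := by
  refine ⟨?_, fun hS ↦ Or.inl ⟨S, hS, rfl⟩⟩
  rintro (⟨G, hG, hGS⟩ | hS)
  · exact Finset.map_injective _ hGS ▸ hG
  · exact hΔ (map_some_subset_insert_none_iff.1 hS) hF

lemma mem_coneUnion_iff_of_none_mem {S : Finset (Option V)} (hS : none ∈ S) :
    S ∈ coneUnion Δ F ↔ ∀ v, some v ∈ S → v ∈ F := by
  have notMem_image : S ∉ (fun G : Finset V ↦ G.map Embedding.some) '' Δ := by
    rintro ⟨G, -, rfl⟩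
    simp at hS
  simp [coneUnion, notMem_image, Finset.subset_iff, Option.forall]

lemma IsFacet.map_some_coneUnion {G : Finset V} (hG : IsFacet Δ G) (hGF : ¬ G ⊆ F) :
    IsFacet (coneUnion Δ F) (G.map Embedding.some) := by
  refine ⟨Or.inl ⟨G, hG.1, rfl⟩, ?_⟩
  rintro A (⟨H, hH, rfl⟩ | hA) hGA
  · rw [hG.2 H hH (Finset.map_subset_map.1 hGA)]
  · exact absurd (map_some_subset_insert_none_iff.1 (hGA.trans hA)) hGF

variable {K : Type*} [Field K]

lemma srIdeal_coneUnion_le (Δ : Set (Finset V)) (F : Finset V) :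
    srIdeal K (coneUnion Δ F) ≤ (srIdeal K Δ).map (rename some) ⊔
      Ideal.span {X none} * (facePrime K F).map (rename some) := by
  rw [srIdeal, Ideal.span_le]
  rintro _ ⟨S, hS, rfl⟩
  by_cases hnone : none ∈ S
  · obtain ⟨v, hvS, hvF⟩ : ∃ v, some v ∈ S ∧ v ∉ F := by
      simpa [mem_coneUnion_iff_of_none_mem hnone] using hS
    have pair_subset : ({none, some v} : Finset (Option V)) ⊆ S := by
      simp [Finset.insert_subset_iff, hnone, hvS]
    refine Ideal.mem_sup_right
      (Ideal.mem_of_dvd _ (Finset.prod_dvd_prod_of_subset _ _ _ pair_subset) ?_)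
    rw [Finset.prod_pair (Option.some_ne_none v).symm, ← rename_X some v]
    exact Ideal.mul_mem_mul (Ideal.mem_span_singleton_self _)
      (Ideal.mem_map_of_mem _ (X_mem_facePrime.2 hvF))
  · obtain ⟨T, rfl⟩ : ∃ T : Finset V, T.map Embedding.some = S :=
      ⟨S.eraseNone, by rw [Finset.map_some_eraseNone, Finset.erase_eq_of_notMem hnone]⟩
    refine Ideal.mem_sup_left ?_
    beta_reduce
    rw [← rename_some_prod_X]
    exact Ideal.mem_map_of_mem _ (prod_X_mem_srIdeal K fun hT ↦ hS (Or.inl ⟨T, hT, rfl⟩))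

lemma map_srIdeal_le_srIdeal_coneUnion (hΔ : IsLowerSet Δ) (hF : F ∈ Δ) :
    (srIdeal K Δ).map (rename some) ≤ srIdeal K (coneUnion Δ F) := by
  rw [srIdeal, Ideal.map_span, Ideal.span_le]
  rintro _ ⟨_, ⟨S, hS, rfl⟩, rfl⟩
  have map_notMem : S.map Embedding.some ∉ coneUnion Δ F := fun h ↦
    hS ((map_some_mem_coneUnion hΔ hF).1 h)
  beta_reduce
  rw [rename_some_prod_X]
  exact prod_X_mem_srIdeal K map_notMem

lemma X_none_mul_map_facePrime_le (Δ : Set (Finset V)) (F : Finset V) :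
    Ideal.span {X none} * (facePrime K F).map (rename some) ≤ srIdeal K (coneUnion Δ F) := by
  rw [facePrime, Ideal.map_span, Ideal.span_mul_span', Ideal.span_le]
  rintro _ ⟨_, rfl, _, ⟨_, ⟨v, hv, rfl⟩, rfl⟩, rfl⟩
  have pair_notMem : ({none, some v} : Finset (Option V)) ∉ coneUnion Δ F := by
    rw [mem_coneUnion_iff_of_none_mem (by simp)]
    exact fun h ↦ hv (h v (by simp))
  simpa using prod_X_mem_srIdeal K pair_notMem

theorem srIdeal_coneUnion (hΔ : IsLowerSet Δ) (hF : F ∈ Δ) :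
    srIdeal K (coneUnion Δ F) = (srIdeal K Δ).map (rename some) ⊔
      Ideal.span {X none} * (facePrime K F).map (rename some) :=
  le_antisymm (srIdeal_coneUnion_le Δ F)
    (sup_le (map_srIdeal_le_srIdeal_coneUnion hΔ hF) (X_none_mul_map_facePrime_le Δ F))

variable [Fintype V]

theorem ara_srIdeal_coneUnion_le (hΔ : IsLowerSet Δ) (hF : F ∈ Δ) :
    ara (srIdeal K (coneUnion Δ F)) ≤ max (ara (srIdeal K Δ)) Fᶜ.card + 1 := by
  have fg (I : Ideal (MvPolynomial V K)) : I.FG := I.fg_of_isNoetherianRing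
  rw [srIdeal_coneUnion hΔ hF]
  refine (ara_sup_span_singleton_mul_le _ ((fg _).map _) ((fg _).map _)
    (Ideal.map_mono (srIdeal_le_facePrime hΔ hF))).trans ?_
  gcongr
  · exact ara_map_le _ (fg _)
  · exact (Ideal.spanFinrank_map_le_of_fg _ (fg _)).trans (spanFinrank_facePrime_le F)

lemma card_compl_map_some (G : Finset V) : (G.map Embedding.some)ᶜ.card = Gᶜ.card + 1 := by
  rw [Finset.card_compl, Finset.card_compl, Finset.card_map, Fintype.card_option,
    Nat.sub_add_comm (Finset.card_le_univ G)]

lemma IsFacet.card_compl_add_one_le_ara_coneUnion (hΔ : IsLowerSet Δ) {G : Finset V}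
    (hG : IsFacet Δ G) (hGF : ¬ G ⊆ F) : Gᶜ.card + 1 ≤ ara (srIdeal K (coneUnion Δ F)) := by
  rw [← card_compl_map_some]
  exact (hG.map_some_coneUnion hGF).card_compl_le_ara (isLowerSet_coneUnion hΔ F)

end ConeUnion

theorem ara_coneUnion_facet_general {V : Type*} [Finite V] [DecidableEq V]
    (K : Type*) [Field K]
    (Δ : Set (Finset V)) (hΔ : IsSimplicialComplex Δ)
    (hsimplex : Δ ≠ Set.univ)
    (F : Finset V) (hF : IsFacet Δ F)
    (hstci : (ara (srIdeal K Δ) : ℕ∞) = idealHeight (srIdeal K Δ)) :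
    ara (srIdeal K (coneUnion Δ F)) = ara (srIdeal K Δ) + 1 := by
  have := Fintype.ofFinite V
  obtain ⟨G, hG, hGF⟩ := hΔ.exists_isFacet_not_subset hsimplex hF.1
  have ara_le_card : ara (srIdeal K Δ) ≤ Gᶜ.card := by
    rw [← Nat.cast_le (α := ℕ∞), hstci]
    exact idealHeight_srIdeal_le_card_compl hΔ.isLowerSet hG.1
  apply le_antisymm
  · calc ara (srIdeal K (coneUnion Δ F))
        ≤ max (ara (srIdeal K Δ)) Fᶜ.card + 1 := ara_srIdeal_coneUnion_le hΔ.isLowerSet hF.1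
      _ = ara (srIdeal K Δ) + 1 := by rw [max_eq_left (hF.card_compl_le_ara hΔ.isLowerSet)]
  · calc ara (srIdeal K Δ) + 1 ≤ Gᶜ.card + 1 := by gcongr
      _ ≤ ara (srIdeal K (coneUnion Δ F)) :=
        hG.card_compl_add_one_le_ara_coneUnion hΔ.isLowerSet hGF

/-- for `K` algebraically closed and `Δ` not a simplex, if `F` is a facet
of `Δ` and `I_Δ` is a set-theoretic complete intersection, then
`ara I_{Δ'} = ara I_Δ + 1` where `Δ' = Δ ∪ co_{x₀}F`. -/
theorem ara_coneUnion_facet {V : Type*} [Fintype V] [DecidableEq V]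
    (K : Type*) [Field K] [IsAlgClosed K]
    (Δ : Set (Finset V)) (hΔ : IsSimplicialComplex Δ)
    (hsimplex : Δ ≠ Set.univ)
    (F : Finset V) (hF : IsFacet Δ F)
    (hstci : (ara (srIdeal K Δ) : ℕ∞) = idealHeight (srIdeal K Δ)) :
    ara (srIdeal K (coneUnion Δ F)) = ara (srIdeal K Δ) + 1 := by
  exact ara_coneUnion_facet_general K Δ hΔ hsimplex F hF hstci
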